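/- Let N ≥ 3, let ω : [0,∞) → ℝ³ be uniformly continuous and bounded, let R : [0,∞) → SO(3) be differentiable with Ṙ(t) = R(t)ω(t)^×, let R_c ∈ SO(3), and let z₁,…,z_N : [0,∞) → S² be continuous. Assume the persistency-of-excitation condition: there exist δ₀, μ₀ > 0 such that for each i ∈ {1,…,N} and all t ≥ 0, ∫_t^{t+δ₀} π(R(τ)R_c z_i(τ)) dτ ≥ μ₀ I₃ (in the positive semidefinite order). Define Π_{z_i}(t) := π(R_c z_i(t)), Λ_z(t) := blkdiag(Π_{z₁}(t),…,Π_{z_N}(t)) ∈ ℝ^{3N×3N}, A_ω(t) := blkdiag(ω(t)^×,…,ω(t)^×) ∈ ℝ^{3N×3N}, Γ := [I₃;…;I₃] ∈ ℝ^{3N×3} (N stacked copies of I₃), A(t) := [[−A_ω(t), −Γ, 0_{3N×3}],[0_{3×3N}, −ω(t)^×, I₃],[0_{3×3N}, 0_{3×3}, −ω(t)^×]] ∈ ℝ^{(3N+6)×(3N+6)}, and C(t) := [Λ_z(t), 0_{3N×3}, 0_{3N×3}] ∈ ℝ^{3N×(3N+6)}. Let Φ(t,τ) be the state transition matrix of A,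 i.e., a continuous family of matrices with ∂Φ(t,τ)/∂t = A(t)Φ(t,τ) and Φ(τ,τ) = I_{3N+6} for all t,τ ≥ 0. Then the pair (A,C) is uniformly observable: there exist constants δ, μ > 0 such that for all t ≥ 0, (1/δ)∫_t^{t+δ} Φ(τ,t)ᵀ C(τ)ᵀ C(τ) Φ(τ,t) dτ ≥ μ I_{3N+6} in the positive semidefinite order. -/

import Mathlib

open Matrix MeasureTheory

noncomputable section

/-- `SO(3)`: rotation matrices. -/
def SO3 (R : Matrix (Fin 3) (Fin 3) ℝ) : Prop :=
  R * Rᵀ = 1 ∧ Rᵀ * R = 1 ∧ R.det = 1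

/-- Skew-symmetric matrix `u^×` with `u^× y = u × y`. -/
def skew (u : Fin 3 → ℝ) : Matrix (Fin 3) (Fin 3) ℝ :=
  !![0, -u 2, u 1; u 2, 0, -u 0; -u 1, u 0, 0]

/-- `π(x) = I₃ - x xᵀ`: orthogonal projection onto the plane orthogonal to `x`. -/
def projMat (x : Fin 3 → ℝ) : Matrix (Fin 3) (Fin 3) ℝ :=
  1 - Matrix.vecMulVec x x

/-- Index type for `ℝ^{3N+6}`: `N` blocks of size 3 (landmarks), plus two blocks
of size 3 (velocity and gravity). -/
abbrev StateIdx (N : ℕ) := (Fin N × Fin 3) ⊕ (Fin 3 ⊕ Fin 3)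

/-- Index type for `ℝ^{3N}`: `N` blocks of size 3. -/
abbrev OutIdx (N : ℕ) := Fin N × Fin 3

/-- Block-diagonal `3N × 3N` matrix with (possibly different) `3×3` blocks. -/
def blkDiag {N : ℕ} (f : Fin N → Matrix (Fin 3) (Fin 3) ℝ) :
    Matrix (Fin N × Fin 3) (Fin N × Fin 3) ℝ :=
  fun p q => if p.1 = q.1 then f p.1 p.2 q.2 else 0

/-- `Γ = [I₃; …; I₃]` (`N` stacked copies of `I₃`). -/
def Gam (N : ℕ) : Matrix (Fin N × Fin 3) (Fin 3) ℝ :=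
  fun p b => if p.2 = b then 1 else 0

/-- The system matrix
`A(ω) = [[-A_ω, -Γ, 0], [0, -ω^×, I₃], [0, 0, -ω^×]]` with
`A_ω = blkdiag(ω^×, …, ω^×)`. -/
def Amat (N : ℕ) (ω : Fin 3 → ℝ) : Matrix (StateIdx N) (StateIdx N) ℝ :=
  Matrix.fromBlocks
    (blkDiag fun _ => -(skew ω))
    (fun p q => Sum.elim (fun b => -(Gam N p b)) (fun _ => (0:ℝ)) q)
    0
    (Matrix.fromBlocks (-(skew ω)) 1 0 (-(skew ω)))

/-- The output matrix `C = [Λ_z, 0, 0]` with `Λ_z = blkdiag(Π_{z₁}, …, Π_{z_N})`,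
`Π_{z_i} = π(R_c z_i)`. -/
def Cmat (N : ℕ) (Rc : Matrix (Fin 3) (Fin 3) ℝ) (z : Fin N → Fin 3 → ℝ) :
    Matrix (OutIdx N) (StateIdx N) ℝ :=
  fun p q => Sum.elim (fun q' => blkDiag (fun i => projMat (Rc *ᵥ z i)) p q') (fun _ => 0) q

/-- The quadratic form `u ↦ uᵀ π(y) u`. -/
def projForm (y u : Fin 3 → ℝ) : ℝ := u ⬝ᵥ u - (y ⬝ᵥ u) ^ 2

lemma projForm_eq_dotProduct_mulVec (y u : Fin 3 → ℝ) : projForm y u = u ⬝ᵥ (projMat y *ᵥ u) := by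
  simp [projForm, projMat, Matrix.mulVec, dotProduct, Fin.sum_univ_three, Matrix.vecMulVec_apply,
    Matrix.one_apply]
  ring

lemma projForm_nonneg {y : Fin 3 → ℝ} (hy : y ⬝ᵥ y = 1) (u : Fin 3 → ℝ) : 0 ≤ projForm y u := by
  simp only [projForm, dotProduct, Fin.sum_univ_three] at *
  nlinarith [sq_nonneg (y 0 * u 1 - y 1 * u 0), sq_nonneg (y 0 * u 2 - y 2 * u 0),
    sq_nonneg (y 1 * u 2 - y 2 * u 1)]

lemma projForm_le (y u : Fin 3 → ℝ) : projForm y u ≤ u ⬝ᵥ u := by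
  simp only [projForm]
  nlinarith [sq_nonneg (y ⬝ᵥ u)]

lemma half_projForm_sub_le {y : Fin 3 → ℝ} (hy : y ⬝ᵥ y = 1) (u v : Fin 3 → ℝ) :
    projForm y v / 2 - (u - v) ⬝ᵥ (u - v) ≤ projForm y u := by
  have h1 := projForm_nonneg hy (2 • u - v)
  have h2 := projForm_le y (u - v)
  have h3 : projForm y (2 • u - v) + projForm y v = 2 * projForm y u + 2 * projForm y (u - v) := by
    simp [projForm, dotProduct, Fin.sum_univ_three]
    ring
  linarith

lemma mulVec_projMat_dotProduct_self {y : Fin 3 → ℝ} (hy : y ⬝ᵥ y = 1) (u : Fin 3 → ℝ) :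
    (projMat y *ᵥ u) ⬝ᵥ (projMat y *ᵥ u) = projForm y u := by
  have h : projMat y *ᵥ u = u - (y ⬝ᵥ u) • y := by
    simp [projMat, Matrix.sub_mulVec, Matrix.vecMulVec_mulVec]
  rw [h, projForm]
  simp only [sub_dotProduct, dotProduct_sub, smul_dotProduct, dotProduct_smul, hy, smul_eq_mul,
    dotProduct_comm u y]
  ring

lemma mulVec_dotProduct_mulVec_of_orthogonal {Q : Matrix (Fin 3) (Fin 3) ℝ} (hQ : Qᵀ * Q = 1)
    (u v : Fin 3 → ℝ) : (Q *ᵥ u) ⬝ᵥ (Q *ᵥ v) = u ⬝ᵥ v := by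
  rw [Matrix.dotProduct_mulVec, Matrix.vecMul_mulVec, hQ, Matrix.vecMul_one]

lemma projForm_mulVec_of_orthogonal {Q : Matrix (Fin 3) (Fin 3) ℝ} (hQ : Qᵀ * Q = 1)
    (y u : Fin 3 → ℝ) : projForm (Q *ᵥ y) (Q *ᵥ u) = projForm y u := by
  simp [projForm, mulVec_dotProduct_mulVec_of_orthogonal hQ]

lemma sq_le_of_interpolation {T : ℝ} (hT : 1 ≤ T) (a b c : ℝ) :
    a ^ 2 + b ^ 2 + c ^ 2
      ≤ 10 * (a ^ 2 + (a + T * b + T ^ 2 * c) ^ 2 + (a + 2 * T * b + (2 * T) ^ 2 * c) ^ 2) := by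
  have hb : b ^ 2 ≤ (T * b) ^ 2 := by
    rw [mul_pow]
    exact le_mul_of_one_le_left (sq_nonneg b) (one_le_pow₀ hT)
  have hc : c ^ 2 ≤ (T ^ 2 * c) ^ 2 := by
    rw [mul_pow]
    exact le_mul_of_one_le_left (sq_nonneg c) (one_le_pow₀ (one_le_pow₀ hT))
  rw [show a + 2 * T * b + (2 * T) ^ 2 * c = a + 2 * (T * b) + 4 * (T ^ 2 * c) by ring]
  generalize T * b = p at *
  generalize T ^ 2 * c = r at *
  have key : a ^ 2 + p ^ 2 + r ^ 2
      ≤ 10 * (a ^ 2 + (a + p + r) ^ 2 + (a + 2 * p + 4 * r) ^ 2) := by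
    obtain ⟨x, hx⟩ : ∃ x, x = a + p + r := ⟨_, rfl⟩
    obtain ⟨w, hw⟩ : ∃ w, w = a + 2 * p + 4 * r := ⟨_, rfl⟩
    rw [← hx, ← hw, show p = (-3 * a + 4 * x - w) / 2 by rw [hx, hw]; ring,
      show r = (a - 2 * x + w) / 2 by rw [hx, hw]; ring]
    nlinarith [sq_nonneg (4 * a + 3 * x), sq_nonneg (3 * a - w), sq_nonneg (x + 4 * w),
      sq_nonneg (a + x), sq_nonneg (a - w), sq_nonneg (x + w), sq_nonneg a, sq_nonneg x,
      sq_nonneg w]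
  linarith

lemma sq_increment_le {T d σ τ : ℝ} (hT : 0 < T) (hd : d ≤ T) (hσ : 0 ≤ σ) (hσT : σ ≤ 2 * T)
    (hστ : σ ≤ τ) (hτ : τ ≤ σ + d) (a b c : ℝ) :
    ((a + τ * b + τ ^ 2 * c) - (a + σ * b + σ ^ 2 * c)) ^ 2 ≤ 114 * (d / T) ^ 2 *
      (a ^ 2 + (a + T * b + T ^ 2 * c) ^ 2 + (a + 2 * T * b + (2 * T) ^ 2 * c) ^ 2) := by
  have h1 : (a + τ * b + τ ^ 2 * c) - (a + σ * b + σ ^ 2 * c)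
      = ((τ - σ) / T) * (T * b + ((τ + σ) / T) * (T ^ 2 * c)) := by
    field_simp
    ring
  have hm0 : 0 ≤ (τ + σ) / T := div_nonneg (by linarith) hT.le
  have hm5 : (τ + σ) / T ≤ 5 := by rw [div_le_iff₀ hT]; linarith
  have hk : ((τ - σ) / T) ^ 2 ≤ (d / T) ^ 2 := by
    have : 0 ≤ τ - σ := by linarith
    gcongr
    linarith
  rw [h1, mul_pow, mul_comm 114, mul_assoc,
    show a + 2 * T * b + (2 * T) ^ 2 * c = a + 2 * (T * b) + 4 * (T ^ 2 * c) by ring]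
  refine mul_le_mul hk ?_ (sq_nonneg _) (sq_nonneg _)
  generalize T * b = p
  generalize T ^ 2 * c = r
  generalize (τ + σ) / T = m at hm0 hm5
  have hr : m ^ 2 * r ^ 2 ≤ 25 * r ^ 2 :=
    mul_le_mul_of_nonneg_right (by nlinarith) (sq_nonneg r)
  have h2 : (p + m * r) ^ 2 ≤ 2 * p ^ 2 + 50 * r ^ 2 := by nlinarith [sq_nonneg (p - m * r)]
  have h3 : p ^ 2 ≤ 7 * (a ^ 2 + (a + p + r) ^ 2 + (a + 2 * p + 4 * r) ^ 2) := by
    obtain ⟨x, hx⟩ : ∃ x, x = a + p + r := ⟨_, rfl⟩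
    obtain ⟨w, hw⟩ : ∃ w, w = a + 2 * p + 4 * r := ⟨_, rfl⟩
    rw [← hx, ← hw, show p = (-3 * a + 4 * x - w) / 2 by rw [hx, hw]; ring]
    nlinarith [sq_nonneg (4 * a + 3 * x), sq_nonneg (a - 3 * w), sq_nonneg (x + 4 * w),
      sq_nonneg a, sq_nonneg x, sq_nonneg w]
  have h4 : r ^ 2 ≤ 2 * (a ^ 2 + (a + p + r) ^ 2 + (a + 2 * p + 4 * r) ^ 2) := by
    obtain ⟨x, hx⟩ : ∃ x, x = a + p + r := ⟨_, rfl⟩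
    obtain ⟨w, hw⟩ : ∃ w, w = a + 2 * p + 4 * r := ⟨_, rfl⟩
    rw [← hx, ← hw, show r = (a - 2 * x + w) / 2 by rw [hx, hw]; ring]
    nlinarith [sq_nonneg (2 * a + x), sq_nonneg (a - w), sq_nonneg (x + 2 * w),
      sq_nonneg a, sq_nonneg x, sq_nonneg w]
  linarith

/-- The rotated state component has the rotated input as derivative. -/
lemma hasDerivWithinAt_rotated {R : ℝ → Matrix (Fin 3) (Fin 3) ℝ} {w : ℝ → Fin 3 → ℝ}
    {S : Matrix (Fin 3) (Fin 3) ℝ} {u : Fin 3 → ℝ} {s : Set ℝ} {t : ℝ}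
    (hR : ∀ i j, HasDerivWithinAt (fun s => R s i j) ((R t * S) i j) s t)
    (hw : ∀ j, HasDerivWithinAt (fun s => w s j) ((-(S *ᵥ w t) + u) j) s t) (k : Fin 3) :
    HasDerivWithinAt (fun s => (R s *ᵥ w s) k) ((R t *ᵥ u) k) s t := by
  have h : HasDerivWithinAt (fun s => ∑ j, R s k j * w s j)
      (∑ j, ((R t * S) k j * w t j + R t k j * (-(S *ᵥ w t) + u) j)) s t :=
    HasDerivWithinAt.fun_sum fun j _ => (hR k j).mul (hw j)
  refine h.congr_deriv ?_
  have : (R t *ᵥ u) k = ((R t * S) *ᵥ w t + R t *ᵥ (-(S *ᵥ w t) + u)) k := by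
    rw [Matrix.mulVec_add, Matrix.mulVec_neg, Matrix.mulVec_mulVec]; simp
  rw [this]
  simp only [Pi.add_apply, Matrix.mulVec, dotProduct, Finset.sum_add_distrib]

lemma eq_of_hasDerivWithinAt_zero {f : ℝ → ℝ}
    (hf : ∀ s ≥ (0:ℝ), HasDerivWithinAt f 0 (Set.Ici 0) s) {t s : ℝ} (ht : 0 ≤ t) (hs : t ≤ s) :
    f s = f t :=
  constant_of_has_deriv_right_zero
    (fun x hx => ((hf x (ht.trans hx.1)).continuousWithinAt).mono
      fun _ hy => ht.trans hy.1)
    (fun x hx => (hf x (ht.trans hx.1)).mono fun _ hy => (ht.trans hx.1).trans hy) s ⟨hs, le_rfl⟩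

lemma dotProduct_self_nonneg {n : Type*} [Fintype n] (u : n → ℝ) : 0 ≤ u ⬝ᵥ u :=
  Finset.sum_nonneg fun k _ => mul_self_nonneg (u k)

lemma continuousOn_projForm {y u : ℝ → Fin 3 → ℝ} {s : Set ℝ} (hy : ContinuousOn y s)
    (hu : ContinuousOn u s) : ContinuousOn (fun τ => projForm (y τ) (u τ)) s := by
  have hy' := continuousOn_pi.1 hy
  have hu' := continuousOn_pi.1 hu
  simp only [projForm, dotProduct]
  fun_prop

/-- A persistently exciting direction cannot stay aligned with a quadratic curve. -/
lemma integral_projForm_quadratic_ge {y : ℝ → Fin 3 → ℝ} {t T d μ : ℝ} (hd : 0 < d) (hT : 1 ≤ T)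
    (hdT : d ≤ T) (hTμ : 1368 * d ^ 3 ≤ μ * T ^ 2) (hy : ∀ τ ≥ t, y τ ⬝ᵥ y τ = 1)
    (hyc : ContinuousOn y (Set.Ici t))
    (hPE : ∀ σ ≥ t, ∀ u, μ * (u ⬝ᵥ u) ≤ ∫ τ in σ..(σ + d), projForm (y τ) u)
    (a b c : Fin 3 → ℝ) :
    μ / 120 * (a ⬝ᵥ a + b ⬝ᵥ b + c ⬝ᵥ c) ≤
      ∫ τ in t..(t + (2 * T + d)), projForm (y τ) (a + (τ - t) • b + (τ - t) ^ 2 • c) := by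
  have hT0 : 0 < T := by linarith
  have hμ : 0 < μ := by
    by_contra h
    have : μ * T ^ 2 ≤ 0 := mul_nonpos_of_nonpos_of_nonneg (not_lt.1 h) (sq_nonneg T)
    have : 0 < d ^ 3 := by positivity
    linarith
  set q : ℝ → Fin 3 → ℝ := fun s => a + s • b + s ^ 2 • c with hq
  set S : ℝ := q 0 ⬝ᵥ q 0 + q T ⬝ᵥ q T + q (2 * T) ⬝ᵥ q (2 * T) with hS
  have hSc : S = ∑ k, (a k ^ 2 + (a k + T * b k + T ^ 2 * c k) ^ 2
      + (a k + 2 * T * b k + (2 * T) ^ 2 * c k) ^ 2) := by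
    simp [hS, hq, dotProduct, Fin.sum_univ_three]
    ring
  have hS0 : 0 ≤ S := by rw [hSc]; positivity
  have hInt : ∀ u : ℝ → Fin 3 → ℝ, Continuous u → ∀ l ≥ t, ∀ r ≥ l,
      IntervalIntegrable (fun τ => projForm (y τ) (u τ)) volume l r := by
    intro u hu l hl r hr
    refine ContinuousOn.intervalIntegrable ?_
    rw [Set.uIcc_of_le hr]
    exact (continuousOn_projForm hyc hu.continuousOn).mono fun x hx => hl.trans hx.1
  have hqc : Continuous fun τ => q (τ - t) := by
    simp only [hq]
    fun_prop
  have hwindow : ∀ σ ≥ 0, σ ≤ 2 * T →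
      μ / 2 * (q σ ⬝ᵥ q σ) - μ / 12 * S ≤
        ∫ τ in t..(t + (2 * T + d)), projForm (y τ) (q (τ - t)) := by
    intro σ hσ hσT
    have hle : ∀ τ ∈ Set.Icc (t + σ) (t + σ + d),
        projForm (y τ) (q σ) / 2 - 114 * (d / T) ^ 2 * S ≤ projForm (y τ) (q (τ - t)) := by
      intro τ hτ
      refine le_trans ?_ (half_projForm_sub_le (hy τ (by linarith [hτ.1])) _ (q σ))
      refine sub_le_sub_left ?_ _
      rw [hSc, Finset.mul_sum]
      refine Finset.sum_le_sum fun k _ => ?_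
      rw [← sq]
      simpa [hq] using sq_increment_le hT0 hdT hσ hσT (τ := τ - t) (by linarith [hτ.1])
        (by linarith [hτ.2]) (a k) (b k) (c k)
    have h1 := intervalIntegral.integral_mono_on (by linarith)
      (((hInt (fun _ => q σ) continuous_const (t + σ) (by linarith) (t + σ + d)
        (by linarith)).div_const 2).sub intervalIntegrable_const)
      (hInt _ hqc (t + σ) (by linarith) (t + σ + d) (by linarith)) hle
    rw [intervalIntegral.integral_sub ((hInt (fun _ => q σ) continuous_const (t + σ) (by linarith)
        (t + σ + d) (by linarith)).div_const 2) intervalIntegrable_const,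
      intervalIntegral.integral_div, intervalIntegral.integral_const, smul_eq_mul,
      add_sub_cancel_left] at h1
    have h2 : ∫ τ in (t + σ)..(t + σ + d), projForm (y τ) (q (τ - t)) ≤
        ∫ τ in t..(t + (2 * T + d)), projForm (y τ) (q (τ - t)) := by
      refine intervalIntegral.integral_mono_interval (by linarith) (by linarith) (by linarith) ?_
        (hInt _ hqc t le_rfl _ (by linarith))
      refine (ae_restrict_iff' measurableSet_Ioc).2 (.of_forall fun τ hτ => ?_)
      exact projForm_nonneg (hy τ hτ.1.le) _
    have h3 := hPE (t + σ) (by linarith) (q σ)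
    have h4 : d * (114 * (d / T) ^ 2 * S) ≤ μ / 12 * S := by
      rw [← mul_assoc]
      refine mul_le_mul_of_nonneg_right ?_ hS0
      rw [div_pow, ← mul_div_assoc, ← mul_div_assoc, div_le_iff₀ (by positivity)]
      linarith
    linarith
  have w0 := hwindow 0 le_rfl (by linarith)
  have w1 := hwindow T hT0.le (by linarith)
  have w2 := hwindow (2 * T) (by linarith) le_rfl
  have hfin : a ⬝ᵥ a + b ⬝ᵥ b + c ⬝ᵥ c ≤ 10 * S := by
    rw [hSc, Finset.mul_sum]
    simp only [dotProduct, ← Finset.sum_add_distrib]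
    refine Finset.sum_le_sum fun k _ => ?_
    simpa only [sq] using sq_le_of_interpolation hT (a k) (b k) (c k)
  have : μ / 120 * (a ⬝ᵥ a + b ⬝ᵥ b + c ⬝ᵥ c) ≤ μ / 120 * (10 * S) := by gcongr
  linarith

lemma dotProduct_integral_mulVec {n : Type*} [Fintype n] {M : ℝ → Matrix n n ℝ} {l r : ℝ}
    (hM : ∀ p q, IntervalIntegrable (fun τ => M τ p q) volume l r) (u : n → ℝ) :
    u ⬝ᵥ ((Matrix.of fun p q => ∫ τ in l..r, M τ p q) *ᵥ u)
      = ∫ τ in l..r, u ⬝ᵥ (M τ *ᵥ u) := by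
  simp only [dotProduct, Matrix.mulVec, Matrix.of_apply]
  rw [intervalIntegral.integral_finsetSum]
  · refine Finset.sum_congr rfl fun p _ => ?_
    rw [intervalIntegral.integral_const_mul, intervalIntegral.integral_finsetSum]
    · simp only [intervalIntegral.integral_mul_const]
    · exact fun q _ => (hM p q).mul_const _
  · exact fun p _ => by
      simpa only [Finset.sum_apply] using
        (IntervalIntegrable.sum Finset.univ fun q _ => (hM p q).mul_const (u q)).const_mul (u p)

lemma Amat_mulVec_landmark {N : ℕ} (ω : Fin 3 → ℝ) (w : StateIdx N → ℝ) (i : Fin N) (j : Fin 3) :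
    (Amat N ω *ᵥ w) (.inl (i, j))
      = (-(skew ω *ᵥ fun k => w (.inl (i, k))) + -fun k => w (.inr (.inl k))) j := by
  have h1 : ∀ q, Amat N ω (.inl (i, j)) (.inl q) = if i = q.1 then -skew ω j q.2 else 0 :=
    fun _ => rfl
  have h2 : ∀ q, Amat N ω (.inl (i, j)) (.inr (.inl q)) = -if j = q then 1 else 0 := fun _ => rfl
  have h3 : ∀ q, Amat N ω (.inl (i, j)) (.inr (.inr q)) = 0 := fun _ => rfl
  simp [Matrix.mulVec, dotProduct, Fintype.sum_sum_type, Fintype.sum_prod_type, h1, h2, h3]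

lemma Amat_mulVec_velocity {N : ℕ} (ω : Fin 3 → ℝ) (w : StateIdx N → ℝ) (j : Fin 3) :
    (Amat N ω *ᵥ w) (.inr (.inl j))
      = (-(skew ω *ᵥ fun k => w (.inr (.inl k))) + fun k => w (.inr (.inr k))) j := by
  have h1 : ∀ q, Amat N ω (.inr (.inl j)) (.inl q) = 0 := fun _ => rfl
  have h2 : ∀ q, Amat N ω (.inr (.inl j)) (.inr (.inl q)) = -skew ω j q := fun _ => rfl
  have h3 : ∀ q, Amat N ω (.inr (.inl j)) (.inr (.inr q)) = (1 : Matrix (Fin 3) (Fin 3) ℝ) j q :=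
    fun _ => rfl
  simp [Matrix.mulVec, dotProduct, Fintype.sum_sum_type, Matrix.one_apply, h1, h2, h3]

lemma Amat_mulVec_gravity {N : ℕ} (ω : Fin 3 → ℝ) (w : StateIdx N → ℝ) (j : Fin 3) :
    (Amat N ω *ᵥ w) (.inr (.inr j)) = (-(skew ω *ᵥ fun k => w (.inr (.inr k))) + 0) j := by
  have h1 : ∀ q, Amat N ω (.inr (.inr j)) (.inl q) = 0 := fun _ => rfl
  have h2 : ∀ q, Amat N ω (.inr (.inr j)) (.inr (.inl q)) = 0 := fun _ => rfl
  have h3 : ∀ q, Amat N ω (.inr (.inr j)) (.inr (.inr q)) = -skew ω j q := fun _ => rfl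
  simp [Matrix.mulVec, dotProduct, Fintype.sum_sum_type, h1, h2, h3]

lemma Cmat_mulVec {N : ℕ} (Rc : Matrix (Fin 3) (Fin 3) ℝ) (z : Fin N → Fin 3 → ℝ)
    (w : StateIdx N → ℝ) (i : Fin N) (j : Fin 3) :
    (Cmat N Rc z *ᵥ w) (i, j) = (projMat (Rc *ᵥ z i) *ᵥ fun k => w (.inl (i, k))) j := by
  simp [Cmat, Matrix.mulVec, dotProduct, Fintype.sum_sum_type, Fintype.sum_prod_type, blkDiag,
    ite_mul]

lemma Cmat_mulVec_dotProduct_self {N : ℕ} {Rc : Matrix (Fin 3) (Fin 3) ℝ} {z : Fin N → Fin 3 → ℝ}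
    (hz : ∀ i, (Rc *ᵥ z i) ⬝ᵥ (Rc *ᵥ z i) = 1) (w : StateIdx N → ℝ) :
    (Cmat N Rc z *ᵥ w) ⬝ᵥ (Cmat N Rc z *ᵥ w)
      = ∑ i, projForm (Rc *ᵥ z i) fun k => w (.inl (i, k)) := by
  simp only [dotProduct, Fintype.sum_prod_type, Cmat_mulVec]
  exact Finset.sum_congr rfl fun i _ => mulVec_projMat_dotProduct_self (hz i) _

/-- In the inertial frame, landmark positions evolve as a quadratic polynomial of time. -/
lemma rotated_landmark_eq {N : ℕ} {ω : ℝ → Fin 3 → ℝ} {R : ℝ → Matrix (Fin 3) (Fin 3) ℝ}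
    (hR : ∀ t ≥ (0:ℝ), ∀ i j, HasDerivWithinAt (fun s => R s i j)
      ((R t * skew (ω t)) i j) (Set.Ici 0) t)
    {w : ℝ → StateIdx N → ℝ}
    (hw : ∀ t ≥ (0:ℝ), ∀ p, HasDerivWithinAt (fun s => w s p)
      ((Amat N (ω t) *ᵥ w t) p) (Set.Ici 0) t)
    {t τ : ℝ} (ht : 0 ≤ t) (hτ : t ≤ τ) (i : Fin N) :
    (R τ *ᵥ fun k => w τ (.inl (i, k))) =
      (R t *ᵥ fun k => w t (.inl (i, k)))
        + (τ - t) • -(R t *ᵥ fun k => w t (.inr (.inl k)))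
        + (τ - t) ^ 2 • -((1 / 2 : ℝ) • (R t *ᵥ fun k => w t (.inr (.inr k)))) := by
  have hP : ∀ s ≥ (0:ℝ), ∀ k, HasDerivWithinAt (fun s => (R s *ᵥ fun k => w s (.inl (i, k))) k)
      (-(R s *ᵥ fun k => w s (.inr (.inl k))) k) (Set.Ici 0) s := by
    intro s hs k
    refine (hasDerivWithinAt_rotated (w := fun s k => w s (.inl (i, k))) (hR s hs)
      (fun j => (hw s hs _).congr_deriv (Amat_mulVec_landmark _ _ i j)) k).congr_deriv ?_
    rw [Matrix.mulVec_neg, Pi.neg_apply]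
  have hV : ∀ s ≥ (0:ℝ), ∀ k, HasDerivWithinAt (fun s => (R s *ᵥ fun k => w s (.inr (.inl k))) k)
      ((R s *ᵥ fun k => w s (.inr (.inr k))) k) (Set.Ici 0) s := fun s hs k =>
    hasDerivWithinAt_rotated (w := fun s k => w s (.inr (.inl k))) (hR s hs)
      (fun j => (hw s hs _).congr_deriv (Amat_mulVec_velocity _ _ j)) k
  have hG : ∀ s ≥ (0:ℝ), ∀ k, HasDerivWithinAt (fun s => (R s *ᵥ fun k => w s (.inr (.inr k))) k)
      0 (Set.Ici 0) s := by
    intro s hs k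
    refine (hasDerivWithinAt_rotated (w := fun s k => w s (.inr (.inr k))) (hR s hs)
      (fun j => (hw s hs _).congr_deriv (Amat_mulVec_gravity _ _ j)) k).congr_deriv ?_
    rw [Matrix.mulVec_zero, Pi.zero_apply]
  ext k
  have hid : ∀ s, HasDerivWithinAt (fun s : ℝ => s - t) 1 (Set.Ici 0) s := fun s =>
    (hasDerivWithinAt_id s _).sub_const t
  have eG := eq_of_hasDerivWithinAt_zero (fun s hs => hG s hs k) ht hτ
  have eV := eq_of_hasDerivWithinAt_zero (fun s hs =>
    ((hV s hs k).sub ((hid s).mul (hG s hs k))).congr_deriv (by ring)) ht hτ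
  have eP := eq_of_hasDerivWithinAt_zero (fun s hs =>
    (((hP s hs k).add ((hid s).mul (hV s hs k))).sub
      ((((hid s).pow 2).mul (hG s hs k)).div_const 2)).congr_deriv (by simp; ring)) ht hτ
  simp only [Pi.add_apply, Pi.sub_apply, Pi.mul_apply, Pi.pow_apply, Pi.neg_apply, Pi.smul_apply,
    smul_eq_mul] at eG eV eP ⊢
  rw [eG] at eV eP
  linear_combination eP - (τ - t) * eV

/-- under the persistency-of-excitation condition on the bearing
measurements, the pair `(A, C)` of the landmark-position/velocity LTV system is
uniformly observable. -/
theorem pair_AC_uniformly_observable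
    (N : ℕ) (hN : 3 ≤ N)
    (ω : ℝ → Fin 3 → ℝ)
    (hωuc : UniformContinuousOn ω (Set.Ici 0))
    (hωbnd : ∃ b : ℝ, ∀ t ≥ (0:ℝ), ‖ω t‖ ≤ b)
    (R : ℝ → Matrix (Fin 3) (Fin 3) ℝ)
    (hRSO : ∀ t ≥ (0:ℝ), SO3 (R t))
    (hRdyn : ∀ t ≥ (0:ℝ), ∀ i j, HasDerivWithinAt (fun s => R s i j)
      ((R t * skew (ω t)) i j) (Set.Ici 0) t)
    (Rc : Matrix (Fin 3) (Fin 3) ℝ) (hRc : SO3 Rc)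
    (z : Fin N → ℝ → Fin 3 → ℝ)
    (hzcont : ∀ i, Continuous (z i))
    (hzunit : ∀ i, ∀ t ≥ (0:ℝ), ∑ k, (z i t k) ^ 2 = 1)
    (δ₀ μ₀ : ℝ) (hδ₀ : 0 < δ₀) (hμ₀ : 0 < μ₀)
    (hPE : ∀ i, ∀ t ≥ (0:ℝ),
      ((Matrix.of fun a b => ∫ τ in t..(t + δ₀), projMat (R τ *ᵥ (Rc *ᵥ z i τ)) a b)
        - μ₀ • (1 : Matrix (Fin 3) (Fin 3) ℝ)).PosSemidef)
    (Φ : ℝ → ℝ → Matrix (StateIdx N) (StateIdx N) ℝ)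
    (hΦcont : ∀ p q, Continuous fun tτ : ℝ × ℝ => Φ tτ.1 tτ.2 p q)
    (hΦdyn : ∀ τ ≥ (0:ℝ), ∀ t ≥ (0:ℝ), ∀ p q,
      HasDerivWithinAt (fun s => Φ s τ p q)
        ((Amat N (ω t) * Φ t τ) p q) (Set.Ici 0) t)
    (hΦid : ∀ τ ≥ (0:ℝ), Φ τ τ = 1) :
    ∃ δ > (0:ℝ), ∃ μ > (0:ℝ), ∀ t ≥ (0:ℝ),
      ((Matrix.of fun p q =>
          (1 / δ) * ∫ τ in t..(t + δ),
            ((Φ τ t)ᵀ * (Cmat N Rc (fun i => z i τ))ᵀ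
              * Cmat N Rc (fun i => z i τ) * Φ τ t) p q)
        - μ • (1 : Matrix (StateIdx N) (StateIdx N) ℝ)).PosSemidef := by

  have hRcont : ContinuousOn R (Set.Ici 0) :=
    continuousOn_pi.2 fun i => continuousOn_pi.2 fun j => fun t ht =>
      (hRdyn t ht i j).continuousWithinAt
  have hunit : ∀ i, ∀ t ≥ (0:ℝ), (Rc *ᵥ z i t) ⬝ᵥ (Rc *ᵥ z i t) = 1 := fun i t ht => by
    rw [mulVec_dotProduct_mulVec_of_orthogonal hRc.2.1, ← hzunit i t ht]
    simp only [dotProduct, sq]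
  have hRunit : ∀ i, ∀ t ≥ (0:ℝ),
      (R t *ᵥ (Rc *ᵥ z i t)) ⬝ᵥ (R t *ᵥ (Rc *ᵥ z i t)) = 1 := fun i t ht => by
    rw [mulVec_dotProduct_mulVec_of_orthogonal (hRSO t ht).2.1, hunit i t ht]
  have hycont : ∀ i, ContinuousOn (fun τ => R τ *ᵥ (Rc *ᵥ z i τ)) (Set.Ici 0) := fun i => by
    have : Continuous fun τ => Rc *ᵥ z i τ := continuous_const.matrix_mulVec (hzcont i)
    rw [continuousOn_iff_continuous_domRestrict] at hRcont ⊢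
    exact hRcont.matrix_mulVec (this.comp continuous_subtype_val)
  have hexc : ∀ i, ∀ t ≥ (0:ℝ), ∀ u,
      μ₀ * (u ⬝ᵥ u) ≤ ∫ τ in t..(t + δ₀), projForm (R τ *ᵥ (Rc *ᵥ z i τ)) u := by
    intro i t ht u
    have h := (hPE i t ht).dotProduct_mulVec_nonneg u
    rw [star_trivial, Matrix.sub_mulVec, dotProduct_sub, Matrix.smul_mulVec, Matrix.one_mulVec,
      dotProduct_smul, smul_eq_mul, dotProduct_integral_mulVec] at h
    · simp only [projForm_eq_dotProduct_mulVec]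
      linarith
    · intro p q
      refine ContinuousOn.intervalIntegrable ?_
      rw [Set.uIcc_of_le (by linarith)]
      have hc := continuousOn_pi.1 ((hycont i).mono
        fun x (hx : x ∈ Set.Icc t (t + δ₀)) => ht.trans hx.1)
      simp only [projMat, Matrix.sub_apply, Matrix.vecMulVec_apply]
      exact continuousOn_const.sub ((hc p).mul (hc q))
  obtain ⟨T, hT1, hTd, hTμ⟩ : ∃ T : ℝ, 1 ≤ T ∧ δ₀ ≤ T ∧ 1368 * δ₀ ^ 3 ≤ μ₀ * T ^ 2 := by
    have h0 : 0 ≤ 1368 * δ₀ ^ 3 / μ₀ := by positivity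
    refine ⟨1 + δ₀ + 1368 * δ₀ ^ 3 / μ₀, by linarith, by linarith, ?_⟩
    rw [← div_le_iff₀' hμ₀]
    nlinarith
  have hδ : 0 < 2 * T + δ₀ := by linarith
  refine ⟨2 * T + δ₀, hδ, 1 / (2 * T + δ₀) * (μ₀ / 480), by positivity, fun t ht => ?_⟩
  set M : ℝ → Matrix (StateIdx N) (StateIdx N) ℝ := fun τ =>
    (Φ τ t)ᵀ * (Cmat N Rc (fun i => z i τ))ᵀ * Cmat N Rc (fun i => z i τ) * Φ τ t with hM
  have hMsymm : ∀ τ p q, M τ q p = M τ p q := fun τ p q => by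
    rw [← Matrix.transpose_apply (M τ)]
    simp only [hM, Matrix.transpose_mul, Matrix.transpose_transpose, Matrix.mul_assoc]
  have hMcont : ∀ p q, Continuous fun τ => M τ p q := by
    have h1 : Continuous fun τ => Φ τ t := continuous_pi fun p => continuous_pi fun q =>
      (hΦcont p q).comp (by fun_prop : Continuous fun τ : ℝ => (τ, t))
    have h2 : Continuous fun τ => Cmat N Rc (fun i => z i τ) := by
      refine continuous_pi fun p => continuous_pi fun q => ?_
      have hc : ∀ i, Continuous fun τ => Rc *ᵥ z i τ := fun i =>
        continuous_const.matrix_mulVec (hzcont i)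
      rcases q with q | q
      · simp only [Cmat, Sum.elim_inl, blkDiag]
        split_ifs
        · simp only [projMat, Matrix.sub_apply, Matrix.vecMulVec_apply]
          exact continuous_const.sub
            (((continuous_apply _).comp (hc _)).mul ((continuous_apply _).comp (hc _)))
        · exact continuous_const
      · exact continuous_const
    have h3 : Continuous M :=
      ((h1.matrix_transpose.matrix_mul h2.matrix_transpose).matrix_mul h2).matrix_mul h1
    exact fun p q => h3.matrix_elem p q
  refine Matrix.PosSemidef.of_dotProduct_mulVec_nonneg ?_ fun x => ?_
  · refine Matrix.IsHermitian.sub ?_ ?_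
    · ext p q
      change 1 / (2 * T + δ₀) * (∫ τ in t..(t + (2 * T + δ₀)), M τ q p)
        = 1 / (2 * T + δ₀) * ∫ τ in t..(t + (2 * T + δ₀)), M τ p q
      simp only [hMsymm _ p q]
    · ext p q
      simp [Matrix.one_apply, eq_comm]
  have hsmul : (Matrix.of fun p q => 1 / (2 * T + δ₀) * ∫ τ in t..(t + (2 * T + δ₀)), M τ p q)
      = (1 / (2 * T + δ₀)) • Matrix.of fun p q => ∫ τ in t..(t + (2 * T + δ₀)), M τ p q := by
    ext p q
    simp
  rw [hsmul, star_trivial, Matrix.sub_mulVec, dotProduct_sub, Matrix.smul_mulVec,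
    Matrix.smul_mulVec, Matrix.one_mulVec, dotProduct_smul, dotProduct_smul, smul_eq_mul,
    smul_eq_mul, dotProduct_integral_mulVec fun p q => (hMcont p q).intervalIntegrable _ _,
    sub_nonneg, mul_assoc]
  refine mul_le_mul_of_nonneg_left ?_ (by positivity)
  set w : ℝ → StateIdx N → ℝ := fun τ => Φ τ t *ᵥ x with hw
  have hwdyn : ∀ s ≥ (0:ℝ), ∀ p, HasDerivWithinAt (fun s => w s p)
      ((Amat N (ω s) *ᵥ w s) p) (Set.Ici 0) s := by
    intro s hs p
    rw [hw, Matrix.mulVec_mulVec]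
    exact HasDerivWithinAt.fun_sum fun q _ => (hΦdyn t ht s hs p q).mul_const (x q)
  have hwt : w t = x := by simp [hw, hΦid t ht]
  set a : Fin N → Fin 3 → ℝ := fun i => R t *ᵥ fun k => x (.inl (i, k))
  set b : Fin 3 → ℝ := -(R t *ᵥ fun k => x (.inr (.inl k))) with hb
  set c : Fin 3 → ℝ := -((1 / 2 : ℝ) • (R t *ᵥ fun k => x (.inr (.inr k)))) with hc
  have hquad : ∀ τ ∈ Set.uIcc t (t + (2 * T + δ₀)), x ⬝ᵥ (M τ *ᵥ x) =
      ∑ i, projForm (R τ *ᵥ (Rc *ᵥ z i τ)) (a i + (τ - t) • b + (τ - t) ^ 2 • c) := by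
    intro τ hτ
    rw [Set.uIcc_of_le (by linarith)] at hτ
    have hτ0 : 0 ≤ τ := ht.trans hτ.1
    have h1 : x ⬝ᵥ (M τ *ᵥ x) = (Cmat N Rc (fun i => z i τ) *ᵥ w τ) ⬝ᵥ
        (Cmat N Rc (fun i => z i τ) *ᵥ w τ) := by
      simp only [hM, hw, Matrix.mulVec_mulVec, Matrix.dotProduct_mulVec, Matrix.vecMul_mulVec,
        Matrix.transpose_mul, Matrix.mul_assoc]
    rw [h1, Cmat_mulVec_dotProduct_self fun i => hunit i τ hτ0]
    refine Finset.sum_congr rfl fun i _ => ?_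
    rw [← projForm_mulVec_of_orthogonal (hRSO τ hτ0).2.1,
      rotated_landmark_eq hRdyn hwdyn ht hτ.1 i, hwt]
  rw [intervalIntegral.integral_congr hquad, intervalIntegral.integral_finsetSum]
  · have hi : ∀ i, μ₀ / 480 * ((fun k => x (.inl (i, k))) ⬝ᵥ (fun k => x (.inl (i, k)))
        + (fun k => x (.inr (.inl k))) ⬝ᵥ (fun k => x (.inr (.inl k)))
        + (fun k => x (.inr (.inr k))) ⬝ᵥ (fun k => x (.inr (.inr k)))) ≤
        ∫ τ in t..(t + (2 * T + δ₀)),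
          projForm (R τ *ᵥ (Rc *ᵥ z i τ)) (a i + (τ - t) • b + (τ - t) ^ 2 • c) := by
      intro i
      refine le_trans ?_ (integral_projForm_quadratic_ge hδ₀ hT1 hTd hTμ
        (fun τ hτ => hRunit i τ (ht.trans hτ))
        ((hycont i).mono fun τ hτ => ht.trans hτ)
        (fun σ hσ => hexc i σ (ht.trans hσ)) (a i) b c)
      simp only [hb, hc, a, neg_dotProduct_neg, smul_dotProduct, dotProduct_smul,
        mulVec_dotProduct_mulVec_of_orthogonal (hRSO t ht).2.1, smul_eq_mul]
      have h1 := dotProduct_self_nonneg (fun k => x (.inl (i, k)))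
      have h2 := dotProduct_self_nonneg (fun k => x (.inr (.inl k)))
      nlinarith [mul_nonneg hμ₀.le h1, mul_nonneg hμ₀.le h2]
    refine le_trans ?_ (Finset.sum_le_sum fun i _ => hi i)
    rw [← Finset.mul_sum]
    refine mul_le_mul_of_nonneg_left ?_ (by positivity)
    have hN1 : (1:ℝ) ≤ N := by exact_mod_cast (by omega : 1 ≤ N)
    have h2 := dotProduct_self_nonneg (fun k => x (.inr (.inl k)))
    have h3 := dotProduct_self_nonneg (fun k => x (.inr (.inr k)))
    simp only [Finset.sum_add_distrib, Finset.sum_const, Finset.card_univ, Fintype.card_fin,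
      nsmul_eq_mul]
    have hx : x ⬝ᵥ x = ∑ i, (fun k => x (.inl (i, k))) ⬝ᵥ (fun k => x (.inl (i, k)))
        + (fun k => x (.inr (.inl k))) ⬝ᵥ (fun k => x (.inr (.inl k)))
        + (fun k => x (.inr (.inr k))) ⬝ᵥ (fun k => x (.inr (.inr k))) := by
      simp only [dotProduct, Fintype.sum_sum_type, Fintype.sum_prod_type, add_assoc]
    rw [hx]
    nlinarith
  · intro i _
    refine ContinuousOn.intervalIntegrable ?_
    rw [Set.uIcc_of_le (by linarith)]
    refine continuousOn_projForm ((hycont i).mono fun τ hτ => ht.trans hτ.1) ?_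
    fun_prop
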